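/- (Dirichlet expectation of a log coordinate, used in the decomposition of the variational loss) Fix K : ℕ with K ≥ 2 and α : Fin K → ℝ with α k > 0 for all k. Then for every j : Fin K, ∫_D log (μ j x) * f_α x dx = ψ (α j) − ψ (∑_k α k), where the integral is the Lebesgue integral over D ⊆ ℝ^(K−1). -/

import Mathlib

open MeasureTheory Finset

/-- The domain `D ⊆ ℝ^(K−1)` of the first `K − 1` coordinates of the probability simplex. -/
def simplexDomain (K : ℕ) : Set (Fin (K - 1) → ℝ) :=
  {x | (∀ i, 0 ≤ x i) ∧ ∑ i, x i ≤ 1}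

/-- The class probabilities: `μ k x = x k` for `k < K − 1` and `μ (K−1) x = 1 − ∑ i, x i`. -/
noncomputable def dirMu (K : ℕ) (k : Fin K) (x : Fin (K - 1) → ℝ) : ℝ :=
  if h : (k : ℕ) < K - 1 then x ⟨k, h⟩ else 1 - ∑ i, x i

/-- The Dirichlet density with parameter `α` (in the coordinates `x ∈ D`). -/
noncomputable def dirDensity (K : ℕ) (α : Fin K → ℝ) (x : Fin (K - 1) → ℝ) : ℝ :=
  (Real.Gamma (∑ k, α k) / ∏ k, Real.Gamma (α k)) * ∏ k, dirMu K k x ^ (α k - 1)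

/-- The digamma function `ψ s = (log ∘ Γ)' s`. -/
noncomputable def digamma (s : ℝ) : ℝ := deriv (fun t => Real.log (Real.Gamma t)) s

/-- Normalised power kernel `t₊^(a-1) / Γ(a)`. -/
noncomputable def rlKer (a t : ℝ) : ℝ := if 0 < t then t ^ (a - 1) / Real.Gamma a else 0

lemma rlKer_measurable (a : ℝ) : Measurable (rlKer a) :=
  Measurable.ite measurableSet_Ioi (by fun_prop) (by fun_prop)

lemma rlKer_nonneg {a : ℝ} (ha : 0 < a) (t : ℝ) : 0 ≤ rlKer a t := by
  unfold rlKer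
  split_ifs with h
  · exact div_nonneg (Real.rpow_nonneg h.le _) (Real.Gamma_pos_of_pos ha).le
  · exact le_rfl

lemma lintegral_scale (f : ℝ → ENNReal) (hf : Measurable f) {s : ℝ} (hs : 0 < s) :
    ∫⁻ t, f t = ENNReal.ofReal s * ∫⁻ u, f (s * u) := by
  conv_lhs => rw [← Real.smul_map_volume_mul_left hs.ne']
  rw [lintegral_smul_measure, lintegral_map hf (by fun_prop), abs_of_pos hs]
  rfl

lemma rlKer_conv {a b : ℝ} (ha : 0 < a) (hb : 0 < b) (s : ℝ) :
    ∫⁻ t, ENNReal.ofReal (rlKer a t) * ENNReal.ofReal (rlKer b (s - t)) =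
      ENNReal.ofReal (rlKer (a + b) s) := by
  have hΓa := Real.Gamma_pos_of_pos ha
  have hΓb := Real.Gamma_pos_of_pos hb
  have hΓ := Real.Gamma_pos_of_pos (add_pos ha hb)
  by_cases hs : 0 < s
  · have m1 := rlKer_measurable a
    have m2 := rlKer_measurable b
    rw [lintegral_scale _ (by fun_prop) hs]
    have key : ∀ u : ℝ, ENNReal.ofReal (rlKer a (s * u)) * ENNReal.ofReal (rlKer b (s - s * u)) =
        ENNReal.ofReal (s ^ (a + b - 2) / Real.Gamma (a + b)) * ProbabilityTheory.betaPDF a b u := by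
      intro u
      rw [← ENNReal.ofReal_mul (rlKer_nonneg ha _), ProbabilityTheory.betaPDF,
        ← ENNReal.ofReal_mul (by positivity)]
      congr 1
      have e : s - s * u = s * (1 - u) := by ring
      rw [e, rlKer, rlKer, ProbabilityTheory.betaPDFReal]
      simp only [mul_pos_iff_of_pos_left hs, sub_pos]
      by_cases h1 : 0 < u <;> by_cases h2 : u < 1 <;> simp [h1, h2]
      rw [Real.mul_rpow hs.le h1.le, Real.mul_rpow hs.le (by linarith), ProbabilityTheory.beta]
      have : s ^ (a + b - 2) = s ^ (a - 1) * s ^ (b - 1) := by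
        rw [← Real.rpow_add hs]; congr 1; ring
      rw [this]
      field_simp
    simp_rw [key]
    rw [lintegral_const_mul _ (by
      exact (ProbabilityTheory.measurable_betaPDFReal a b).ennreal_ofReal),
      ProbabilityTheory.lintegral_betaPDF_eq_one ha hb, mul_one, ← ENNReal.ofReal_mul hs.le,
      rlKer, if_pos hs]
    congr 1
    have : s ^ (a + b - 1) = s * s ^ (a + b - 2) := by
      nth_rw 2 [← Real.rpow_one s]
      rw [← Real.rpow_add hs]; congr 1; ring
    rw [this, mul_div_assoc]
  · have : ∀ t : ℝ, ENNReal.ofReal (rlKer a t) * ENNReal.ofReal (rlKer b (s - t)) = 0 := by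
      intro t
      by_cases h : 0 < t
      · have : ¬ 0 < s - t := by linarith
        simp [rlKer, this]
      · simp [rlKer, h]
    rw [lintegral_congr this]
    simp [rlKer, hs]

lemma rlKer_multi (n : ℕ) : ∀ (a : Fin n → ℝ) (_ : ∀ i, 0 < a i) (b : ℝ) (_ : 0 < b) (s : ℝ),
    ∫⁻ x : Fin n → ℝ, (∏ i, ENNReal.ofReal (rlKer (a i) (x i))) *
      ENNReal.ofReal (rlKer b (s - ∑ i, x i)) =
      ENNReal.ofReal (rlKer (∑ i, a i + b) s) := by
  induction n with
  | zero =>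
    intro a ha b hb s
    simp [volume_pi]
  | succ n ih =>
    intro a ha b hb s
    have m : ∀ a, Measurable (rlKer a) := rlKer_measurable
    rw [← ((volume_preserving_piFinSuccAbove (fun _ : Fin (n + 1) => ℝ) 0).symm).lintegral_comp_emb
      (MeasurableEquiv.measurableEmbedding _)]
    rw [Measure.volume_eq_prod, lintegral_prod _ (by
      simp only [MeasurableEquiv.piFinSuccAbove_symm_apply, Fin.insertNthEquiv]
      apply Measurable.aemeasurable
      simp only [Fin.prod_univ_succ, Fin.sum_univ_succ]
      simp
      fun_prop)]
    simp only [MeasurableEquiv.piFinSuccAbove_symm_apply, Fin.insertNthEquiv]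
    simp only [Fin.prod_univ_succ, Fin.sum_univ_succ]
    simp only [Fin.insertNth_zero', Equiv.coe_fn_mk, Fin.cons_zero, Fin.cons_succ, mul_assoc,
      ← sub_sub]
    have : ∀ t : ℝ, ∫⁻ x : Fin n → ℝ, ENNReal.ofReal (rlKer (a 0) t) *
        ((∏ i, ENNReal.ofReal (rlKer (a i.succ) (x i))) *
        ENNReal.ofReal (rlKer b (s - t - ∑ i, x i))) = ENNReal.ofReal (rlKer (a 0) t) *
        ENNReal.ofReal (rlKer (∑ i : Fin n, a i.succ + b) (s - t)) := by
      intro t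
      rw [lintegral_const_mul _ (by fun_prop), ih _ (fun i => ha _) b hb]
    refine (lintegral_congr this).trans ?_
    rw [rlKer_conv (ha 0) (add_pos_of_nonneg_of_pos (Finset.sum_nonneg fun i _ => (ha _).le) hb),
      add_assoc]

lemma dirMu_castSucc (n : ℕ) (i : Fin n) (x : Fin n → ℝ) : dirMu (n + 1) i.castSucc x = x i := by
  simp [dirMu]

lemma dirMu_last (n : ℕ) (x : Fin n → ℝ) : dirMu (n + 1) (Fin.last n) x = 1 - ∑ i, x i := by
  simp [dirMu]

lemma dirMu_measurable (n : ℕ) (k : Fin (n + 1)) :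
    Measurable (fun x : Fin n → ℝ => dirMu (n + 1) k x) := by
  induction k using Fin.lastCases with
  | last => simp only [dirMu_last]; fun_prop
  | cast i => simp only [dirMu_castSucc]; fun_prop

lemma sum_dirMu (n : ℕ) (x : Fin n → ℝ) : ∑ k, dirMu (n + 1) k x = 1 := by
  rw [Fin.sum_univ_castSucc]
  simp [dirMu_last, dirMu_castSucc]

/-- The open simplex. -/
def openSimplex (n : ℕ) : Set (Fin n → ℝ) := {x | ∀ k, 0 < dirMu (n + 1) k x}

lemma openSimplex_measurable (n : ℕ) : MeasurableSet (openSimplex n) := by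
  rw [openSimplex, Set.ofPred_forall]
  exact MeasurableSet.iInter fun k => measurableSet_lt measurable_const (dirMu_measurable n k)

lemma simplexDomain_eq (n : ℕ) :
    (simplexDomain (n + 1) : Set (Fin n → ℝ)) = {x | ∀ k, 0 ≤ dirMu (n + 1) k x} := by
  ext x
  simp only [simplexDomain, Set.mem_ofPred_eq, Fin.forall_fin_succ', dirMu_castSucc, dirMu_last,
    sub_nonneg]
  rfl

lemma null_hyper (n : ℕ) (k : Fin (n + 1)) :
    volume {x : Fin n → ℝ | dirMu (n + 1) k x = 0} = 0 := by
  let A : AffineSubspace ℝ (Fin n → ℝ) :=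
    { carrier := {x : Fin n → ℝ | dirMu (n + 1) k x = 0}
      smul_vsub_vadd_mem' := by
        intro c p q r
        induction k using Fin.lastCases with
        | last =>
          simp only [dirMu_last, Set.mem_ofPred_eq]
          intro hp hq hr
          simp [Finset.sum_add_distrib, ← Finset.mul_sum]
          have e1 : ∑ i, p i = 1 := by linarith
          have e2 : ∑ i, q i = 1 := by linarith
          have e3 : ∑ i, r i = 1 := by linarith
          rw [e1, e2, e3]; ring
        | cast i =>
          simp only [dirMu_castSucc, Set.mem_ofPred_eq]
          intro hp hq hr
          simp [hp, hq, hr] }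
  refine Measure.addHaar_affineSubspace volume A ?_
  intro h
  have hall : ∀ x : Fin n → ℝ, dirMu (n + 1) k x = 0 := by
    intro x
    have : x ∈ A := by rw [h]; trivial
    exact this
  induction k using Fin.lastCases with
  | last => have := hall 0; simp [dirMu_last] at this
  | cast i => have := hall 1; simp [dirMu_castSucc] at this

lemma simplex_ae (n : ℕ) (hn : 0 < n) :
    (simplexDomain (n + 1) : Set (Fin n → ℝ)) =ᵐ[volume] openSimplex n := by
  have h : ∀ᵐ x : Fin n → ℝ, ∀ k, dirMu (n + 1) k x ≠ 0 := by
    rw [ae_all_iff]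
    intro k
    rw [ae_iff]
    simpa using null_hyper n k
  rw [simplexDomain_eq]
  filter_upwards [h] with x hx
  apply propext
  exact forall_congr' fun k => ⟨fun h => lt_of_le_of_ne h (hx k).symm, fun h => h.le⟩

lemma P_lintegral (n : ℕ) (α : Fin (n + 1) → ℝ) (hα : ∀ k, 0 < α k) :
    ∫⁻ x in openSimplex n, ENNReal.ofReal
      (∏ k, (dirMu (n + 1) k x ^ (α k - 1) / Real.Gamma (α k))) =
      ENNReal.ofReal (1 / Real.Gamma (∑ k, α k)) := by
  rw [← lintegral_indicator (openSimplex_measurable n)]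
  have := rlKer_multi n (fun i => α i.castSucc) (fun i => hα _) (α (Fin.last n)) (hα _) 1
  rw [← Fin.sum_univ_castSucc] at this
  simp only [rlKer, zero_lt_one, if_true, Real.one_rpow] at this
  rw [← this]
  apply lintegral_congr
  intro x
  have e : (∏ i : Fin n, ENNReal.ofReal (rlKer (α i.castSucc) (x i))) *
      ENNReal.ofReal (rlKer (α (Fin.last n)) (1 - ∑ i, x i)) =
      ∏ k, ENNReal.ofReal (rlKer (α k) (dirMu (n + 1) k x)) := by
    rw [Fin.prod_univ_castSucc]
    simp only [dirMu_castSucc, dirMu_last]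
  refine Eq.trans ?_ e.symm
  by_cases hx : x ∈ openSimplex n
  · rw [Set.indicator_of_mem hx, ENNReal.ofReal_prod_of_nonneg]
    · refine Finset.prod_congr rfl fun k _ => ?_
      rw [rlKer, if_pos (hx k)]
    · intro k _
      exact div_nonneg (Real.rpow_nonneg (hx k).le _) (Real.Gamma_pos_of_pos (hα k)).le
  · rw [Set.indicator_of_notMem hx]
    simp only [openSimplex, Set.mem_ofPred_eq, not_forall] at hx
    obtain ⟨k, hk⟩ := hx
    symm
    apply Finset.prod_eq_zero (Finset.mem_univ k)
    simp [rlKer, hk]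

lemma P_meas (n : ℕ) (α : Fin (n + 1) → ℝ) :
    Measurable (fun x : Fin n → ℝ => ∏ k, dirMu (n + 1) k x ^ (α k - 1)) :=
  Finset.measurable_prod _ fun k _ => (dirMu_measurable n k).pow_const _

lemma P_integral (n : ℕ) (α : Fin (n + 1) → ℝ) (hα : ∀ k, 0 < α k) :
    IntegrableOn (fun x : Fin n → ℝ => ∏ k, dirMu (n + 1) k x ^ (α k - 1)) (openSimplex n) ∧
    ∫ x in openSimplex n, ∏ k, dirMu (n + 1) k x ^ (α k - 1) =
      (∏ k, Real.Gamma (α k)) / Real.Gamma (∑ k, α k) := by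
  have hΓ : ∀ k, 0 < Real.Gamma (α k) := fun k => Real.Gamma_pos_of_pos (hα k)
  have hprod : 0 < ∏ k, Real.Gamma (α k) := Finset.prod_pos fun k _ => hΓ k
  have hS : 0 < Real.Gamma (∑ k, α k) :=
    Real.Gamma_pos_of_pos (Finset.sum_pos (fun k _ => hα k) Finset.univ_nonempty)
  have L := P_lintegral n α hα
  simp only [Finset.prod_div_distrib] at L
  have nn : 0 ≤ᵐ[volume.restrict (openSimplex n)] fun x : Fin n → ℝ =>
      (∏ k, dirMu (n + 1) k x ^ (α k - 1)) / ∏ k, Real.Gamma (α k) := by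
    refine ae_restrict_of_forall_mem (openSimplex_measurable n) fun x hx => ?_
    exact div_nonneg (Finset.prod_nonneg fun k _ => Real.rpow_nonneg (hx k).le _) hprod.le
  have ms := ((P_meas n α).div_const (∏ k, Real.Gamma (α k))).aestronglyMeasurable
    (μ := volume.restrict (openSimplex n))
  have I : IntegrableOn (fun x : Fin n → ℝ =>
      (∏ k, dirMu (n + 1) k x ^ (α k - 1)) / ∏ k, Real.Gamma (α k)) (openSimplex n) := by
    refine ⟨ms, ?_⟩
    rw [hasFiniteIntegral_iff_ofReal nn, L]
    exact ENNReal.ofReal_lt_top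
  have E := integral_eq_lintegral_of_nonneg_ae nn ms
  rw [L, ENNReal.toReal_ofReal (by positivity), integral_div] at E
  constructor
  · have := I.mul_const (∏ k, Real.Gamma (α k))
    simpa [IntegrableOn, div_mul_cancel₀ _ hprod.ne'] using this
  · field_simp at E ⊢
    linarith

lemma digamma_eq {s : ℝ} (hs : 0 < s) : digamma s = deriv Real.Gamma s / Real.Gamma s := by
  have hd : DifferentiableAt ℝ Real.Gamma s := Real.differentiableAt_Gamma fun m h => by
    have : (0 : ℝ) ≤ m := m.cast_nonneg
    linarith
  exact deriv.log hd (Real.Gamma_pos_of_pos hs).ne'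

lemma gamma_shift {s : ℝ} (hs : 0 < s) :
    HasDerivAt (fun e : ℝ => Real.Gamma (s + e)) (deriv Real.Gamma s) 0 := by
  have hd : DifferentiableAt ℝ Real.Gamma (s + 0) := Real.differentiableAt_Gamma fun m h => by
    have : (0 : ℝ) ≤ m := m.cast_nonneg
    linarith
  have := hd.hasDerivAt.comp_const_add s 0
  simpa using this

lemma main_succ (n : ℕ) (hn : 0 < n) (α : Fin (n + 1) → ℝ) (hα : ∀ k, 0 < α k)
    (j : Fin (n + 1)) :
    ∫ x : Fin n → ℝ in simplexDomain (n + 1),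
      Real.log (dirMu (n + 1) j x) * dirDensity (n + 1) α x =
      digamma (α j) - digamma (∑ k, α k) := by
  refine (setIntegral_congr_set (simplex_ae n hn)).trans ?_
  set A := ∑ k, α k with hA
  have hApos : 0 < A := Finset.sum_pos (fun k _ => hα k) Finset.univ_nonempty
  have hΓ : ∀ k, 0 < Real.Gamma (α k) := fun k => Real.Gamma_pos_of_pos (hα k)
  have hprod : 0 < ∏ k, Real.Gamma (α k) := Finset.prod_pos fun k _ => hΓ k
  have hS : 0 < Real.Gamma A := Real.Gamma_pos_of_pos hApos
  let P : (Fin n → ℝ) → ℝ := fun x => ∏ k, dirMu (n + 1) k x ^ (α k - 1)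
  let m : (Fin n → ℝ) → ℝ := fun x => dirMu (n + 1) j x
  have mm : Measurable m := dirMu_measurable n j
  have mP : Measurable P := P_meas n α
  have hlt : ∀ x ∈ openSimplex n, m x ≤ 1 := by
    intro x hx
    rw [← sum_dirMu n x]
    exact Finset.single_le_sum (f := fun k => dirMu (n + 1) k x) (fun k _ => (hx k).le)
      (Finset.mem_univ j)
  have hPos : ∀ x ∈ openSimplex n, 0 ≤ P x := fun x hx =>
    Finset.prod_nonneg fun k _ => Real.rpow_nonneg (hx k).le _
  -- shifted integrals
  have shift : ∀ e : ℝ, -α j < e →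
      IntegrableOn (fun x => m x ^ e * P x) (openSimplex n) ∧
      ∫ x in openSimplex n, m x ^ e * P x =
        (Real.Gamma (α j + e) * ∏ k ∈ Finset.univ.erase j, Real.Gamma (α k)) /
          Real.Gamma (A + e) := by
    intro e he
    let β : Fin (n + 1) → ℝ := Function.update α j (α j + e)
    have hβj : β j = α j + e := by simp [β]
    have hβk : ∀ k, k ≠ j → β k = α k := fun k hk => by simp [β, hk]
    have hβ : ∀ k, 0 < β k := by
      intro k
      by_cases hk : k = j
      · subst hk; rw [hβj]; linarith
      · rw [hβk k hk]; exact hα k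
    obtain ⟨h1, h2⟩ := P_integral n β hβ
    have hsum : ∑ k, β k = A + e := by
      rw [hA, ← Finset.add_sum_erase _ _ (Finset.mem_univ j),
        ← Finset.add_sum_erase _ α (Finset.mem_univ j), hβj,
        Finset.sum_congr rfl (fun k hk => hβk k (Finset.ne_of_mem_erase hk))]
      ring
    have hpr : ∏ k, Real.Gamma (β k) =
        Real.Gamma (α j + e) * ∏ k ∈ Finset.univ.erase j, Real.Gamma (α k) := by
      rw [← Finset.mul_prod_erase _ _ (Finset.mem_univ j), hβj]
      congr 1
      exact Finset.prod_congr rfl (fun k hk => by rw [hβk k (Finset.ne_of_mem_erase hk)])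
    have heq : Set.EqOn (fun x : Fin n → ℝ => ∏ k, dirMu (n + 1) k x ^ (β k - 1))
        (fun x => m x ^ e * P x) (openSimplex n) := by
      intro x hx
      simp only [P, m]
      rw [← Finset.mul_prod_erase _ _ (Finset.mem_univ j),
        ← Finset.mul_prod_erase _ (fun k => dirMu (n + 1) k x ^ (α k - 1)) (Finset.mem_univ j),
        hβj, ← mul_assoc, ← Real.rpow_add (hx j)]
      congr 1
      · congr 1; ring
      · exact Finset.prod_congr rfl (fun k hk => by rw [hβk k (Finset.ne_of_mem_erase hk)])
    rw [hsum, hpr] at h2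
    exact ⟨h1.congr_fun heq (openSimplex_measurable n),
      by rw [← h2]; exact (setIntegral_congr_fun (openSimplex_measurable n) heq).symm⟩
  have hj := hα j
  set δ := α j / 4 with hδ
  have hδ0 : 0 < δ := by positivity
  have D := hasDerivAt_integral_of_dominated_loc_of_deriv_le
    (μ := volume.restrict (openSimplex n)) (x₀ := (0 : ℝ)) (s := Set.Ioo (-δ) δ)
    (F := fun e x => m x ^ e * P x)
    (F' := fun e x => m x ^ e * Real.log (m x) * P x)
    (bound := fun x => 1 / δ * (m x ^ (-(2 * δ)) * P x))
    (Ioo_mem_nhds (by linarith) hδ0)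
    (Filter.Eventually.of_forall fun e => by
      apply Measurable.aestronglyMeasurable; fun_prop)
    (shift 0 (by linarith)).1
    (by apply Measurable.aestronglyMeasurable; fun_prop)
    (by
      refine ae_restrict_of_forall_mem (openSimplex_measurable n) fun x hx e he => ?_
      have hm : 0 < m x := hx j
      rw [Real.norm_eq_abs, abs_mul, abs_of_nonneg (hPos x hx), ← mul_assoc]
      refine mul_le_mul_of_nonneg_right ?_ (hPos x hx)
      have h1 := (Real.abs_log_mul_self_rpow_lt (m x) δ hm (hlt x hx) hδ0).le
      rw [abs_mul, abs_of_pos (Real.rpow_pos_of_pos hm _)] at h1 ⊢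
      have h2 : m x ^ e ≤ m x ^ (-δ) :=
        Real.rpow_le_rpow_of_exponent_ge hm (hlt x hx) he.1.le
      have h3 : m x ^ (-δ) = m x ^ δ * m x ^ (-(2 * δ)) := by
        rw [← Real.rpow_add hm]; congr 1; ring
      calc m x ^ e * |Real.log (m x)| ≤ (m x ^ δ * m x ^ (-(2 * δ))) * |Real.log (m x)| := by
            rw [← h3]; gcongr
        _ = (|Real.log (m x)| * m x ^ δ) * m x ^ (-(2 * δ)) := by ring
        _ ≤ _ := by gcongr)
    ((shift (-(2 * δ)) (by linarith)).1.const_mul _)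
    (by
      refine ae_restrict_of_forall_mem (openSimplex_measurable n) fun x hx e he => ?_
      have hm : 0 < m x := hx j
      exact ((Real.hasStrictDerivAt_const_rpow hm e).hasDerivAt).mul_const _)
  have D1 := D.2
  have D2 : HasDerivAt (fun e : ℝ =>
      (Real.Gamma (α j + e) * ∏ k ∈ Finset.univ.erase j, Real.Gamma (α k)) /
          Real.Gamma (A + e)) _ 0 :=
    ((gamma_shift hj).mul_const _).div (gamma_shift hApos) (by simpa using hS.ne')
  have D3 := D1.unique (D2.congr_of_eventuallyEq (by
    filter_upwards [Ioo_mem_nhds (show -δ < 0 by linarith) hδ0] with e he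
    exact (shift e (by linarith [he.1])).2))
  have hfin : ∀ x : Fin n → ℝ, Real.log (dirMu (n + 1) j x) * dirDensity (n + 1) α x =
      (Real.Gamma A / ∏ k, Real.Gamma (α k)) * (m x ^ (0 : ℝ) * Real.log (m x) * P x) := by
    intro x
    rw [Real.rpow_zero]
    simp only [dirDensity, m, P, hA]
    ring
  refine (integral_congr_ae (Filter.Eventually.of_forall hfin)).trans ?_
  rw [integral_const_mul, D3, digamma_eq hj, digamma_eq hApos,
    ← Finset.mul_prod_erase _ _ (Finset.mem_univ j)]
  have hE : 0 < ∏ k ∈ Finset.univ.erase j, Real.Gamma (α k) := Finset.prod_pos fun k _ => hΓ k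
  have := hΓ j
  simp only [add_zero]
  field_simp

/-- the Dirichlet expectation of a log coordinate:
`∫_D log (μ j x) f_α x dx = ψ (α j) − ψ (∑_k α k)`. -/
theorem dirichlet_integral_log_coord (K : ℕ) (hK : 2 ≤ K)
    (α : Fin K → ℝ) (hα : ∀ k, 0 < α k) (j : Fin K) :
    ∫ x in simplexDomain K, Real.log (dirMu K j x) * dirDensity K α x =
      digamma (α j) - digamma (∑ k, α k) := by
  obtain ⟨n, rfl⟩ : ∃ n, K = n + 1 := ⟨K - 1, by omega⟩
  exact main_succ n (by omega) α hα j
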